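/- Let (ω̂_n)_{n≥1} and (σ̂_n)_{n≥1} be sequences of density matrices, with ω̂_n and σ̂_n on (ℂ^d)^{⊗n}, both satisfying the upper factorization property with a common constant β ≥ 1 and the lower factorization property with a common constant α ∈ (0,1], and assume ω̂_1 and σ̂_1 are positive definite. Then for every t ∈ [0,1] the limit C(t) := lim_{n→∞} (1/n)·log Tr(ω̂_n^{1−t}·σ̂_n^{t}) exists and is finite, the function t ↦ C(t) is continuous on [0,1], and lim_{n→∞} (1/n)·log P_min(ω̂_n, σ̂_n) = min_{t∈[0,1]} C(t). -/

import Mathlib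

open Matrix Filter
open scoped ComplexOrder Classical

/-- The Kronecker product of a matrix on `(ℂ^d)^{⊗k}` and a matrix on `(ℂ^d)^{⊗(n-k)}`,
viewed as a matrix on `(ℂ^d)^{⊗n}` via the canonical identification of `Fin n` with
`Fin k ⊕ Fin (n-k)`. -/
def tkron {d n k : ℕ} (h : k ≤ n)
    (M : Matrix (Fin k → Fin d) (Fin k → Fin d) ℂ)
    (N : Matrix (Fin (n - k) → Fin d) (Fin (n - k) → Fin d) ℂ) :
    Matrix (Fin n → Fin d) (Fin n → Fin d) ℂ :=
  Matrix.of fun x y =>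
    M (fun i => x ⟨i.1, lt_of_lt_of_le i.2 h⟩) (fun i => y ⟨i.1, lt_of_lt_of_le i.2 h⟩) *
      N (fun j => x ⟨k + j.1, by have := j.2; omega⟩)
        (fun j => y ⟨k + j.1, by have := j.2; omega⟩)

/-- A sequence of states on `(ℂ^d)^{⊗n}` satisfies the *upper factorization property*
with constant `β` if `ω_n ≤ β·(ω_k ⊗ ω_{n-k})` in the Loewner order for all `0 < k < n`. -/
def UpperFact {d : ℕ} (ω : (n : ℕ) → Matrix (Fin n → Fin d) (Fin n → Fin d) ℂ)
    (β : ℝ) : Prop :=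
  ∀ (n k : ℕ) (_ : 0 < k) (hkn : k < n),
    (β • tkron hkn.le (ω k) (ω (n - k)) - ω n).PosSemidef

/-- A sequence of states on `(ℂ^d)^{⊗n}` satisfies the *lower factorization property*
with constant `α` if `ω_n ≥ α·(ω_k ⊗ ω_{n-k})` in the Loewner order for all `0 < k < n`. -/
def LowerFact {d : ℕ} (ω : (n : ℕ) → Matrix (Fin n → Fin d) (Fin n → Fin d) ℂ)
    (α : ℝ) : Prop :=
  ∀ (n k : ℕ) (_ : 0 < k) (hkn : k < n),
    (ω n - α • tkron hkn.le (ω k) (ω (n - k)) ).PosSemidef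

/-- The power `A^t` of a positive semidefinite matrix by the functional calculus, with the
convention that `A^0` is the support projection of `A` (and, more generally, the power is
taken only on the support).  Junk value `0` if `A` is not Hermitian. -/
noncomputable def mpow {I : Type*} [Fintype I] [DecidableEq I] (A : Matrix I I ℂ)
    (t : ℝ) : Matrix I I ℂ :=
  if hA : A.IsHermitian then
    (hA.eigenvectorUnitary : Matrix I I ℂ) *
      Matrix.diagonal (fun i =>
        if hA.eigenvalues i = 0 then (0 : ℂ) else ((hA.eigenvalues i ^ t : ℝ) : ℂ)) *
      star (hA.eigenvectorUnitary : Matrix I I ℂ)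
  else 0

/-- The minimal Bayesian error probability (with uniform prior) for discriminating the
states `ω` and `σ` by a binary test `0 ≤ A ≤ I`. -/
noncomputable def Pmin {I : Type*} [Fintype I] [DecidableEq I]
    (ω σ : Matrix I I ℂ) : ℝ :=
  sInf {v : ℝ | ∃ A : Matrix I I ℂ, A.PosSemidef ∧ (1 - A).PosSemidef ∧
    v = ((1 / 2 : ℂ) * (ω * (1 - A)).trace + (1 / 2 : ℂ) * (σ * A).trace).re}

/-- Extended-real-valued logarithm, with `log x = -∞` for `x ≤ 0`. -/
noncomputable def elog (x : ℝ) : EReal :=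
  if x ≤ 0 then ⊥ else ((Real.log x : ℝ) : EReal)

section Diagonalization

variable {I : Type*} [Fintype I] [DecidableEq I]

/-- The matrix `U diag(a) U*`. -/
noncomputable def conjDiag (U : Matrix I I ℂ) (a : I → ℝ) : Matrix I I ℂ :=
  U * diagonal (fun i => (a i : ℂ)) * Uᴴ

lemma conjDiag_comp_eq_of_eq {U V : Matrix I I ℂ} (hU : U ∈ unitaryGroup I ℂ)
    (hV : V ∈ unitaryGroup I ℂ) {a b : I → ℝ} (h : conjDiag U a = conjDiag V b) (f : ℝ → ℝ) :
    conjDiag U (fun i => f (a i)) = conjDiag V (fun i => f (b i)) := by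
  have hU1 : Uᴴ * U = 1 := mem_unitaryGroup_iff'.1 hU
  have hU2 : U * Uᴴ = 1 := mem_unitaryGroup_iff.1 hU
  have hV1 : Vᴴ * V = 1 := mem_unitaryGroup_iff'.1 hV
  have hV2 : V * Vᴴ = 1 := mem_unitaryGroup_iff.1 hV
  have hW : (Vᴴ * U) * diagonal (fun i => (a i : ℂ))
      = diagonal (fun i => (b i : ℂ)) * (Vᴴ * U) := by
    have h' := congrArg (fun M => Vᴴ * M * U) h
    simp only [conjDiag] at h'
    calc (Vᴴ * U) * diagonal (fun i => (a i : ℂ))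
        = Vᴴ * (U * diagonal (fun i => (a i : ℂ)) * Uᴴ) * U := by
          simp only [Matrix.mul_assoc, hU1, Matrix.mul_one]
      _ = Vᴴ * (V * diagonal (fun i => (b i : ℂ)) * Vᴴ) * U := h'
      _ = (Vᴴ * V) * diagonal (fun i => (b i : ℂ)) * (Vᴴ * U) := by
          simp only [Matrix.mul_assoc]
      _ = _ := by rw [hV1, Matrix.one_mul]
  have hWf : (Vᴴ * U) * diagonal (fun i => (f (a i) : ℂ))
      = diagonal (fun i => (f (b i) : ℂ)) * (Vᴴ * U) := by
    ext i j
    have hij := congrFun (congrFun hW i) j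
    rw [mul_diagonal, diagonal_mul] at hij ⊢
    by_cases h0 : (Vᴴ * U) i j = 0
    · simp [h0]
    · rw [mul_comm] at hij
      have : a j = b i := by exact_mod_cast mul_right_cancel₀ h0 hij
      rw [this, mul_comm]
  simp only [conjDiag]
  calc U * diagonal (fun i => (f (a i) : ℂ)) * Uᴴ
      = (V * Vᴴ) * U * diagonal (fun i => (f (a i) : ℂ)) * Uᴴ := by rw [hV2, Matrix.one_mul]
    _ = V * ((Vᴴ * U) * diagonal (fun i => (f (a i) : ℂ))) * Uᴴ := by
        simp only [Matrix.mul_assoc]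
    _ = V * diagonal (fun i => (f (b i) : ℂ)) * Vᴴ * (U * Uᴴ) := by
        rw [hWf]; simp only [Matrix.mul_assoc]
    _ = _ := by rw [hU2, Matrix.mul_one]

lemma Matrix.IsHermitian.eq_conjDiag {A : Matrix I I ℂ} (hA : A.IsHermitian) :
    A = conjDiag (hA.eigenvectorUnitary : Matrix I I ℂ) hA.eigenvalues := by
  conv_lhs => rw [hA.spectral_theorem]
  rfl

lemma posSemidef_conjDiag (U : Matrix I I ℂ) {a : I → ℝ} (ha : ∀ i, 0 ≤ a i) :
    (conjDiag U a).PosSemidef := by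
  refine PosSemidef.mul_mul_conjTranspose_same (PosSemidef.diagonal fun i => ?_) U
  simpa using ha i

lemma conjDiag_sub (U : Matrix I I ℂ) (a b : I → ℝ) :
    conjDiag U a - conjDiag U b = conjDiag U (fun i => a i - b i) := by
  simp only [conjDiag, ← Matrix.sub_mul, ← Matrix.mul_sub]
  congr 2
  rw [diagonal_sub]
  simp

lemma conjDiag_mul {U : Matrix I I ℂ} (hU : U ∈ unitaryGroup I ℂ) (a b : I → ℝ) :
    conjDiag U a * conjDiag U b = conjDiag U (fun i => a i * b i) := by
  have hU1 : Uᴴ * U = 1 := mem_unitaryGroup_iff'.1 hU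
  simp only [conjDiag]
  calc _ = U * (diagonal (fun i => (a i : ℂ)) * (Uᴴ * U) * diagonal (fun i => (b i : ℂ))) * Uᴴ := by
        simp only [Matrix.mul_assoc]
    _ = _ := by
        rw [hU1, Matrix.mul_one, diagonal_mul_diagonal]
        simp

lemma conjDiag_one {U : Matrix I I ℂ} (hU : U ∈ unitaryGroup I ℂ) :
    conjDiag U (fun _ => 1) = 1 := by
  have hU2 : U * Uᴴ = 1 := mem_unitaryGroup_iff.1 hU
  simp [conjDiag, hU2]

lemma smul_conjDiag (c : ℝ) (U : Matrix I I ℂ) (a : I → ℝ) :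
    c • conjDiag U a = conjDiag U (fun i => c * a i) := by
  rw [conjDiag, conjDiag, ← Matrix.smul_mul, ← Matrix.mul_smul]
  congr 2
  ext i j
  by_cases h : i = j
  · subst h; simp
  · simp [h]

lemma posDef_conjDiag {U : Matrix I I ℂ} (hU : U ∈ unitaryGroup I ℂ) {a : I → ℝ}
    (ha : ∀ i, 0 < a i) : (conjDiag U a).PosDef := by
  have hu : IsUnit U := isUnit_iff_exists.2 ⟨Uᴴ, mem_unitaryGroup_iff.1 hU,
    mem_unitaryGroup_iff'.1 hU⟩
  refine (Matrix.IsUnit.posDef_star_right_conjugate_iff hu).2 (PosDef.diagonal fun i => ?_)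
  simpa using ha i

lemma Matrix.PosDef.exists_eq_conjDiag {A : Matrix I I ℂ} (hA : A.PosDef) :
    ∃ U ∈ unitaryGroup I ℂ, ∃ a : I → ℝ, (∀ i, 0 < a i) ∧ A = conjDiag U a :=
  ⟨_, hA.1.eigenvectorUnitary.2, _, hA.eigenvalues_pos, hA.1.eq_conjDiag⟩

lemma mpow_eq_conjDiag {A : Matrix I I ℂ} (hA : A.PosDef) (t : ℝ) :
    mpow A t = conjDiag (hA.1.eigenvectorUnitary : Matrix I I ℂ)
      (fun i => hA.1.eigenvalues i ^ t) := by
  rw [mpow, dif_pos hA.1, conjDiag]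
  congr 3
  ext i
  rw [if_neg (hA.eigenvalues_pos i).ne']

lemma mpow_conjDiag {U : Matrix I I ℂ} (hU : U ∈ unitaryGroup I ℂ) {a : I → ℝ}
    (ha : ∀ i, 0 < a i) (t : ℝ) :
    mpow (conjDiag U a) t = conjDiag U (fun i => a i ^ t) := by
  have hA := posDef_conjDiag hU ha
  rw [mpow_eq_conjDiag hA]
  exact conjDiag_comp_eq_of_eq hA.1.eigenvectorUnitary.2 hU hA.1.eq_conjDiag.symm (fun x => x ^ t)

lemma mpow_posDef {A : Matrix I I ℂ} (hA : A.PosDef) (t : ℝ) : (mpow A t).PosDef := by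
  rw [mpow_eq_conjDiag hA]
  exact posDef_conjDiag hA.1.eigenvectorUnitary.2
    fun i => Real.rpow_pos_of_pos (hA.eigenvalues_pos i) t

lemma mpow_mul_mpow {A : Matrix I I ℂ} (hA : A.PosDef) (s t : ℝ) :
    mpow A s * mpow A t = mpow A (s + t) := by
  rw [mpow_eq_conjDiag hA, mpow_eq_conjDiag hA, mpow_eq_conjDiag hA,
    conjDiag_mul hA.1.eigenvectorUnitary.2]
  simp only [Real.rpow_add (hA.eigenvalues_pos _)]

lemma mpow_one {A : Matrix I I ℂ} (hA : A.PosDef) : mpow A 1 = A := by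
  rw [mpow_eq_conjDiag hA]
  simp only [Real.rpow_one]
  exact hA.1.eq_conjDiag.symm

lemma mpow_smul {A : Matrix I I ℂ} (hA : A.PosDef) {c : ℝ} (hc : 0 < c) (t : ℝ) :
    mpow (c • A) t = c ^ t • mpow A t := by
  obtain ⟨U, hU, a, ha, rfl⟩ := hA.exists_eq_conjDiag
  rw [smul_conjDiag, mpow_conjDiag hU ha, mpow_conjDiag hU fun i => mul_pos hc (ha i),
    smul_conjDiag]
  simp only [Real.mul_rpow hc.le (ha _).le]

section OperatorMonotone

open scoped MatrixOrder Matrix.Norms.L2Operator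

lemma mpow_eq_rpow {A : Matrix I I ℂ} (hA : A.PosDef) (t : ℝ) : mpow A t = A ^ t := by
  rw [CFC.rpow_eq_cfc_real (nonneg_iff_posSemidef.2 hA.posSemidef), hA.1.cfc_eq,
    mpow_eq_conjDiag hA]
  rfl

/-- The Löwner–Heinz theorem for powers of positive definite matrices. -/
lemma mpow_le_mpow {A B : Matrix I I ℂ} (hA : A.PosDef) (hB : B.PosDef)
    (hAB : (B - A).PosSemidef) {t : ℝ} (ht : t ∈ Set.Icc (0 : ℝ) 1) :
    (mpow B t - mpow A t).PosSemidef := by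
  rw [mpow_eq_rpow hA, mpow_eq_rpow hB]
  exact CFC.rpow_le_rpow ht (le_iff.2 hAB)

end OperatorMonotone

lemma trace_mul_re_nonneg {A B : Matrix I I ℂ} (hA : A.PosSemidef) (hB : B.PosSemidef) :
    0 ≤ ((A * B).trace).re := by
  open scoped MatrixOrder in
  obtain ⟨C, rfl⟩ := CStarAlgebra.nonneg_iff_eq_star_mul_self.1 (nonneg_iff_posSemidef.2 hA)
  have h := (hB.mul_mul_conjTranspose_same C).trace_nonneg
  rw [Matrix.trace_mul_comm, ← Matrix.mul_assoc] at h
  exact (Complex.le_def.1 h).1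

lemma trace_mul_re_le_left {A A' B : Matrix I I ℂ} (hA : (A' - A).PosSemidef)
    (hB : B.PosSemidef) : ((A * B).trace).re ≤ ((A' * B).trace).re := by
  have h := trace_mul_re_nonneg hA hB
  rw [Matrix.sub_mul, trace_sub, Complex.sub_re] at h
  linarith

lemma trace_mul_re_le_right {A B B' : Matrix I I ℂ} (hA : A.PosSemidef)
    (hB : (B' - B).PosSemidef) : ((A * B).trace).re ≤ ((A * B').trace).re := by
  rw [trace_mul_comm A, trace_mul_comm A]
  exact trace_mul_re_le_left hB hA

lemma trace_conjDiag_mul_conjDiag (U V : Matrix I I ℂ) (a b : I → ℝ) :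
    ((conjDiag U a * conjDiag V b).trace).re
      = ∑ i, ∑ j, a i * b j * Complex.normSq ((Uᴴ * V) i j) := by
  have h : (conjDiag U a * conjDiag V b).trace
      = (diagonal (fun i => (a i : ℂ)) * (Uᴴ * V) * diagonal (fun i => (b i : ℂ))
        * (Uᴴ * V)ᴴ).trace := by
    rw [conjDiag, conjDiag, conjTranspose_mul, conjTranspose_conjTranspose]
    simp only [Matrix.mul_assoc]
    rw [trace_mul_comm]
    simp only [Matrix.mul_assoc]
  rw [h, trace, Complex.re_sum]
  refine Finset.sum_congr rfl fun i _ => ?_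
  rw [diag_apply, Matrix.mul_apply, Complex.re_sum]
  refine Finset.sum_congr rfl fun j _ => ?_
  rw [mul_diagonal, diagonal_mul, conjTranspose_apply]
  simp [Complex.normSq_apply]
  ring

end Diagonalization

section BinaryTests

variable {I : Type*} [Fintype I] [DecidableEq I]

lemma test_value_re (A B T : Matrix I I ℂ) :
    ((1 / 2 : ℂ) * (A * (1 - T)).trace + (1 / 2 : ℂ) * (B * T).trace).re
      = (1 / 2) * (((A * (1 - T)).trace).re + ((B * T).trace).re) := by
  have h : (1 / 2 : ℂ) = ((1 / 2 : ℝ) : ℂ) := by norm_num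
  rw [h, Complex.add_re, Complex.re_ofReal_mul, Complex.re_ofReal_mul]
  ring

/-- The trace inequality behind the quantum Chernoff bound: some binary test has total error at
most `Tr A^{1-t} B^t`. -/
lemma exists_test_le_trace_mpow {A B : Matrix I I ℂ} (hA : A.PosDef) (hB : B.PosDef) {t : ℝ}
    (ht : t ∈ Set.Icc (0 : ℝ) 1) :
    ∃ T : Matrix I I ℂ, T.PosSemidef ∧ (1 - T).PosSemidef ∧
      ((A * (1 - T)).trace).re + ((B * T).trace).re
        ≤ ((mpow A (1 - t) * mpow B t).trace).re := by
  have hD : (A - B).IsHermitian := hA.1.sub hB.1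
  obtain ⟨U, hU, e, hDU⟩ : ∃ U ∈ unitaryGroup I ℂ, ∃ e : I → ℝ, A - B = conjDiag U e :=
    ⟨_, hD.eigenvectorUnitary.2, _, hD.eq_conjDiag⟩
  set P := conjDiag U (fun i => max (e i) 0)
  set T := conjDiag U (fun i => if 0 < e i then 1 else 0)
  have hP : P.PosSemidef := posSemidef_conjDiag U fun i => le_max_right _ _
  have hDT : (A - B) * T = P := by
    rw [hDU, conjDiag_mul hU]
    congr 1
    ext i
    split_ifs with h
    · rw [max_eq_left h.le, mul_one]
    · rw [max_eq_right (not_lt.1 h), mul_zero]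
  have hQ : (B + P).PosDef := hB.add_posSemidef hP
  have hAQ : (B + P - A).PosSemidef := by
    have h : B + P - A = P - (A - B) := by abel
    rw [h, hDU, conjDiag_sub]
    exact posSemidef_conjDiag U fun i => sub_nonneg.2 (le_max_left _ _)
  have hBQ : (B + P - B).PosSemidef := by rwa [add_sub_cancel_left]
  have ht' : 1 - t ∈ Set.Icc (0 : ℝ) 1 := ⟨by linarith [ht.2], by linarith [ht.1]⟩
  refine ⟨T, posSemidef_conjDiag U fun i => by split_ifs <;> norm_num, ?_, ?_⟩
  · rw [← conjDiag_one hU, conjDiag_sub]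
    exact posSemidef_conjDiag U fun i => by split_ifs <;> norm_num
  · have hsplit : ∀ {M : Matrix I I ℂ}, M.PosDef → mpow M t * mpow M (1 - t) = M := by
      intro M hM
      rw [mpow_mul_mpow hM, add_sub_cancel, mpow_one hM]
    have h1 : (((mpow A t - mpow B t) * mpow A (1 - t)).trace).re
        ≤ (((mpow (B + P) t - mpow B t) * mpow A (1 - t)).trace).re := by
      refine trace_mul_re_le_left ?_ (mpow_posDef hA _).posSemidef
      rw [sub_sub_sub_cancel_right]
      exact mpow_le_mpow hA hQ hAQ ht
    have h2 : (((mpow (B + P) t - mpow B t) * mpow A (1 - t)).trace).re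
        ≤ (((mpow (B + P) t - mpow B t) * mpow (B + P) (1 - t)).trace).re :=
      trace_mul_re_le_right (mpow_le_mpow hB hQ hBQ ht) (mpow_le_mpow hA hQ hAQ ht')
    have h3 : ((mpow B t * mpow B (1 - t)).trace).re
        ≤ ((mpow B t * mpow (B + P) (1 - t)).trace).re :=
      trace_mul_re_le_right (mpow_posDef hB _).posSemidef (mpow_le_mpow hB hQ hBQ ht')
    rw [Matrix.sub_mul, trace_sub, Complex.sub_re] at h1 h2
    rw [Matrix.sub_mul, trace_sub, Complex.sub_re] at h1 h2
    rw [hsplit hA] at h1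
    rw [hsplit hQ, trace_add, Complex.add_re] at h2
    rw [hsplit hB] at h3
    have hT : ((A * (1 - T)).trace).re + ((B * T).trace).re
        = (A.trace).re - (P.trace).re := by
      rw [← hDT, Matrix.mul_sub, Matrix.mul_one, Matrix.sub_mul, trace_sub, trace_sub]
      simp only [Complex.sub_re]
      ring
    rw [hT, trace_mul_comm (mpow A (1 - t))]
    linarith

lemma Pmin_bddBelow {A B : Matrix I I ℂ} (hA : A.PosSemidef) (hB : B.PosSemidef) :
    BddBelow {v : ℝ | ∃ T : Matrix I I ℂ, T.PosSemidef ∧ (1 - T).PosSemidef ∧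
      v = ((1 / 2 : ℂ) * (A * (1 - T)).trace + (1 / 2 : ℂ) * (B * T).trace).re} := by
  refine ⟨0, ?_⟩
  rintro v ⟨T, hT, hT', rfl⟩
  rw [test_value_re]
  have h1 := trace_mul_re_nonneg hA hT'
  have h2 := trace_mul_re_nonneg hB hT
  positivity

lemma Pmin_le_trace_mpow {A B : Matrix I I ℂ} (hA : A.PosDef) (hB : B.PosDef) {t : ℝ}
    (ht : t ∈ Set.Icc (0 : ℝ) 1) :
    Pmin A B ≤ (1 / 2) * ((mpow A (1 - t) * mpow B t).trace).re := by
  obtain ⟨T, hT, hT', hle⟩ := exists_test_le_trace_mpow hA hB ht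
  refine (csInf_le (Pmin_bddBelow hA.posSemidef hB.posSemidef) ⟨T, hT, hT', rfl⟩).trans ?_
  rw [test_value_re]
  gcongr

lemma posSemidef_sub_mul_self {T : Matrix I I ℂ} (hT : T.PosSemidef) (hT' : (1 - T).PosSemidef) :
    (T - T * T).PosSemidef := by
  have h1 := hT'.conjTranspose_mul_mul_same T
  have h2 := hT.conjTranspose_mul_mul_same (1 - T)
  rw [hT.1.eq] at h1
  rw [hT'.1.eq] at h2
  convert h1.add h2 using 1
  noncomm_ring

lemma trace_conjDiag_mul_mul_self {U V S : Matrix I I ℂ} (hV : V ∈ unitaryGroup I ℂ)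
    (hS : S.IsHermitian) (a : I → ℝ) :
    ((conjDiag U a * (S * S)).trace).re
      = ∑ i, ∑ j, a i * Complex.normSq ((Uᴴ * S * V) i j) := by
  have hV2 : V * Vᴴ = 1 := mem_unitaryGroup_iff.1 hV
  have h : (conjDiag U a * (S * S)).trace
      = (diagonal (fun i => (a i : ℂ)) * (Uᴴ * S * V) * (Uᴴ * S * V)ᴴ).trace := by
    have h1 : (Uᴴ * S * V) * (Uᴴ * S * V)ᴴ = Uᴴ * (S * S) * U := by
      rw [conjTranspose_mul, conjTranspose_mul, conjTranspose_conjTranspose, hS.eq]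
      calc _ = Uᴴ * S * (V * Vᴴ) * S * U := by simp only [Matrix.mul_assoc]
        _ = _ := by rw [hV2]; simp only [Matrix.mul_assoc, Matrix.one_mul]
    rw [Matrix.mul_assoc, h1, conjDiag]
    simp only [Matrix.mul_assoc]
    rw [trace_mul_comm]
    simp only [Matrix.mul_assoc]
  rw [h, trace, Complex.re_sum]
  refine Finset.sum_congr rfl fun i _ => ?_
  rw [diag_apply, Matrix.mul_apply, Complex.re_sum]
  refine Finset.sum_congr rfl fun j _ => ?_
  rw [diagonal_mul, conjTranspose_apply]
  simp [Complex.normSq_apply]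
  ring

lemma normSq_add_le_two_mul (z w : ℂ) :
    Complex.normSq (z + w) ≤ 2 * (Complex.normSq z + Complex.normSq w) := by
  simp only [Complex.normSq_apply, Complex.add_re, Complex.add_im]
  nlinarith [sq_nonneg (z.re - w.re), sq_nonneg (z.im - w.im)]

/-- Every test between `A ≥ U diag(a) U*` and `B ≥ V diag(b) V*` has error at least half the
overlap of the classical distributions `a i |⟨u_i, v_j⟩|²` and `b j |⟨u_i, v_j⟩|²`. -/
lemma sum_min_le_test {A B U V T : Matrix I I ℂ} (hU : U ∈ unitaryGroup I ℂ)
    (hV : V ∈ unitaryGroup I ℂ) {a b : I → ℝ} (ha : ∀ i, 0 ≤ a i) (hb : ∀ i, 0 ≤ b i)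
    (hA : (A - conjDiag U a).PosSemidef) (hB : (B - conjDiag V b).PosSemidef)
    (hT : T.PosSemidef) (hT' : (1 - T).PosSemidef) :
    (1 / 2) * ∑ i, ∑ j, min (a i) (b j) * Complex.normSq ((Uᴴ * V) i j)
      ≤ ((A * (1 - T)).trace).re + ((B * T).trace).re := by
  have hT'' : (1 - (1 - T)).PosSemidef := by rwa [sub_sub_cancel]
  have h1 := (trace_mul_re_le_right (posSemidef_conjDiag U ha)
    (posSemidef_sub_mul_self hT' hT'')).trans (trace_mul_re_le_left hA hT')
  have h2 := (trace_mul_re_le_right (posSemidef_conjDiag V hb)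
    (posSemidef_sub_mul_self hT hT')).trans (trace_mul_re_le_left hB hT)
  rw [trace_conjDiag_mul_mul_self hV hT'.1] at h1
  rw [trace_conjDiag_mul_mul_self hU hT.1, Finset.sum_comm] at h2
  refine le_trans ?_ (add_le_add h1 h2)
  rw [Finset.mul_sum, ← Finset.sum_add_distrib]
  refine Finset.sum_le_sum fun i _ => ?_
  rw [Finset.mul_sum, ← Finset.sum_add_distrib]
  refine Finset.sum_le_sum fun j _ => ?_
  have hsw : Complex.normSq ((Vᴴ * T * U) j i) = Complex.normSq ((Uᴴ * T * V) i j) := by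
    have h : Uᴴ * T * V = (Vᴴ * T * U)ᴴ := by
      rw [conjTranspose_mul, conjTranspose_mul, conjTranspose_conjTranspose, hT.1.eq,
        Matrix.mul_assoc]
    rw [h, conjTranspose_apply, RCLike.star_def, Complex.normSq_conj]
  have hadd : (Uᴴ * V) i j = (Uᴴ * (1 - T) * V) i j + (Uᴴ * T * V) i j := by
    rw [← Matrix.add_apply, ← Matrix.add_mul, ← Matrix.mul_add, sub_add_cancel, Matrix.mul_one]
  rw [hsw, hadd]
  have hn := normSq_add_le_two_mul ((Uᴴ * (1 - T) * V) i j) ((Uᴴ * T * V) i j)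
  have hm : 0 ≤ min (a i) (b j) := le_min (ha i) (hb j)
  have e1 := mul_le_mul_of_nonneg_left hn hm
  have e2 := mul_le_mul_of_nonneg_right (min_le_left (a i) (b j))
    (Complex.normSq_nonneg ((Uᴴ * (1 - T) * V) i j))
  have e3 := mul_le_mul_of_nonneg_right (min_le_right (a i) (b j))
    (Complex.normSq_nonneg ((Uᴴ * T * V) i j))
  linarith

lemma sum_min_le_Pmin {A B U V : Matrix I I ℂ} (hU : U ∈ unitaryGroup I ℂ)
    (hV : V ∈ unitaryGroup I ℂ) {a b : I → ℝ} (ha : ∀ i, 0 ≤ a i) (hb : ∀ i, 0 ≤ b i)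
    (hA : (A - conjDiag U a).PosSemidef) (hB : (B - conjDiag V b).PosSemidef) :
    (1 / 4) * ∑ i, ∑ j, min (a i) (b j) * Complex.normSq ((Uᴴ * V) i j) ≤ Pmin A B := by
  refine le_csInf ⟨_, 0, PosSemidef.zero, by simpa using PosSemidef.one, rfl⟩ ?_
  rintro v ⟨T, hT, hT', rfl⟩
  rw [test_value_re]
  linarith [sum_min_le_test hU hV ha hb hA hB hT hT']

end BinaryTests

section TensorProducts

open scoped Kronecker

variable {d n k : ℕ}

/-- The canonical identification of multi-indices of length `n` with pairs of multi-indices of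
lengths `k` and `n - k`. -/
def splitEquiv (d : ℕ) {n k : ℕ} (h : k ≤ n) :
    (Fin n → Fin d) ≃ (Fin k → Fin d) × (Fin (n - k) → Fin d) where
  toFun x := (fun i => x ⟨i.1, lt_of_lt_of_le i.2 h⟩,
    fun j => x ⟨k + j.1, by have := j.2; omega⟩)
  invFun p := fun i => if hi : i.1 < k then p.1 ⟨i.1, hi⟩
    else p.2 ⟨i.1 - k, by have := i.2; omega⟩
  left_inv x := by
    funext i
    by_cases hi : i.1 < k
    · simp [hi]
    · have : k + (i.1 - k) = i.1 := by omega
      simp [hi, this]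
  right_inv p := by
    refine Prod.ext ?_ ?_
    · funext i
      simp
    · funext j
      simp

lemma tkron_eq_submatrix (h : k ≤ n) (M : Matrix (Fin k → Fin d) (Fin k → Fin d) ℂ)
    (N : Matrix (Fin (n - k) → Fin d) (Fin (n - k) → Fin d) ℂ) :
    tkron h M N = (M ⊗ₖ N).submatrix (splitEquiv d h) (splitEquiv d h) := rfl

lemma tkron_apply (h : k ≤ n) (M : Matrix (Fin k → Fin d) (Fin k → Fin d) ℂ)
    (N : Matrix (Fin (n - k) → Fin d) (Fin (n - k) → Fin d) ℂ) (x y : Fin n → Fin d) :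
    tkron h M N x y = M (splitEquiv d h x).1 (splitEquiv d h y).1
      * N (splitEquiv d h x).2 (splitEquiv d h y).2 := rfl

lemma tkron_mul_tkron (h : k ≤ n) (M M' : Matrix (Fin k → Fin d) (Fin k → Fin d) ℂ)
    (N N' : Matrix (Fin (n - k) → Fin d) (Fin (n - k) → Fin d) ℂ) :
    tkron h M N * tkron h M' N' = tkron h (M * M') (N * N') := by
  simp only [tkron_eq_submatrix, submatrix_mul_equiv, ← mul_kronecker_mul]

lemma conjTranspose_tkron (h : k ≤ n) (M : Matrix (Fin k → Fin d) (Fin k → Fin d) ℂ)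
    (N : Matrix (Fin (n - k) → Fin d) (Fin (n - k) → Fin d) ℂ) :
    (tkron h M N)ᴴ = tkron h Mᴴ Nᴴ := by
  simp only [tkron_eq_submatrix, conjTranspose_submatrix, conjTranspose_kronecker]

lemma tkron_one_one (h : k ≤ n) :
    tkron h (1 : Matrix (Fin k → Fin d) (Fin k → Fin d) ℂ) 1 = 1 := by
  simp [tkron_eq_submatrix]

lemma trace_tkron (h : k ≤ n) (M : Matrix (Fin k → Fin d) (Fin k → Fin d) ℂ)
    (N : Matrix (Fin (n - k) → Fin d) (Fin (n - k) → Fin d) ℂ) :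
    (tkron h M N).trace = M.trace * N.trace := by
  rw [← trace_kronecker, tkron_eq_submatrix]
  exact Equiv.sum_comp (splitEquiv d h) fun p => (M ⊗ₖ N) p p

lemma posSemidef_tkron (h : k ≤ n) {M : Matrix (Fin k → Fin d) (Fin k → Fin d) ℂ}
    {N : Matrix (Fin (n - k) → Fin d) (Fin (n - k) → Fin d) ℂ} (hM : M.PosSemidef)
    (hN : N.PosSemidef) : (tkron h M N).PosSemidef :=
  (hM.kronecker hN).submatrix (splitEquiv d h)

lemma posDef_tkron (h : k ≤ n) {M : Matrix (Fin k → Fin d) (Fin k → Fin d) ℂ}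
    {N : Matrix (Fin (n - k) → Fin d) (Fin (n - k) → Fin d) ℂ} (hM : M.PosDef)
    (hN : N.PosDef) : (tkron h M N).PosDef :=
  (hM.kronecker hN).submatrix (splitEquiv d h).injective

lemma tkron_sub_right (h : k ≤ n) (M : Matrix (Fin k → Fin d) (Fin k → Fin d) ℂ)
    (N N' : Matrix (Fin (n - k) → Fin d) (Fin (n - k) → Fin d) ℂ) :
    tkron h M (N - N') = tkron h M N - tkron h M N' := by
  ext x y
  simp only [tkron_apply, Matrix.sub_apply, mul_sub]

lemma tkron_mem_unitaryGroup (h : k ≤ n) {U : Matrix (Fin k → Fin d) (Fin k → Fin d) ℂ}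
    {V : Matrix (Fin (n - k) → Fin d) (Fin (n - k) → Fin d) ℂ}
    (hU : U ∈ unitaryGroup (Fin k → Fin d) ℂ) (hV : V ∈ unitaryGroup (Fin (n - k) → Fin d) ℂ) :
    tkron h U V ∈ unitaryGroup (Fin n → Fin d) ℂ := by
  have hU2 : U * Uᴴ = 1 := mem_unitaryGroup_iff.1 hU
  have hV2 : V * Vᴴ = 1 := mem_unitaryGroup_iff.1 hV
  rw [mem_unitaryGroup_iff, star_eq_conjTranspose, conjTranspose_tkron, tkron_mul_tkron, hU2, hV2,
    tkron_one_one]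

/-- The spectrum of a tensor product. -/
def tensorSpectrum (h : k ≤ n) (a : (Fin k → Fin d) → ℝ) (b : (Fin (n - k) → Fin d) → ℝ) :
    (Fin n → Fin d) → ℝ :=
  fun x => a (splitEquiv d h x).1 * b (splitEquiv d h x).2

lemma tensorSpectrum_pos (h : k ≤ n) {a : (Fin k → Fin d) → ℝ}
    {b : (Fin (n - k) → Fin d) → ℝ} (ha : ∀ i, 0 < a i) (hb : ∀ i, 0 < b i) (x : Fin n → Fin d) :
    0 < tensorSpectrum h a b x :=
  mul_pos (ha _) (hb _)

lemma tkron_conjDiag (h : k ≤ n) (U : Matrix (Fin k → Fin d) (Fin k → Fin d) ℂ)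
    (V : Matrix (Fin (n - k) → Fin d) (Fin (n - k) → Fin d) ℂ)
    (a : (Fin k → Fin d) → ℝ) (b : (Fin (n - k) → Fin d) → ℝ) :
    tkron h (conjDiag U a) (conjDiag V b) = conjDiag (tkron h U V) (tensorSpectrum h a b) := by
  rw [conjDiag, conjDiag, conjDiag, ← tkron_mul_tkron, ← tkron_mul_tkron, conjTranspose_tkron]
  congr 2
  rw [tkron_eq_submatrix, diagonal_kronecker_diagonal, submatrix_diagonal_equiv]
  congr 1
  ext x
  simp [tensorSpectrum]

lemma mpow_tkron (h : k ≤ n) {M : Matrix (Fin k → Fin d) (Fin k → Fin d) ℂ}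
    {N : Matrix (Fin (n - k) → Fin d) (Fin (n - k) → Fin d) ℂ} (hM : M.PosDef)
    (hN : N.PosDef) (t : ℝ) : mpow (tkron h M N) t = tkron h (mpow M t) (mpow N t) := by
  obtain ⟨U, hU, a, ha, rfl⟩ := hM.exists_eq_conjDiag
  obtain ⟨V, hV, b, hb, rfl⟩ := hN.exists_eq_conjDiag
  rw [tkron_conjDiag, mpow_conjDiag (tkron_mem_unitaryGroup h hU hV)
    (tensorSpectrum_pos h ha hb), mpow_conjDiag hU ha, mpow_conjDiag hV hb, tkron_conjDiag]
  congr 1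
  ext x
  exact Real.mul_rpow (ha _).le (hb _).le

end TensorProducts

section ChernoffFunction

variable {I : Type*} [Fintype I] [DecidableEq I]

/-- The quantity `Tr A^{1-t} B^t`. -/
noncomputable def chernoffTrace (A B : Matrix I I ℂ) (t : ℝ) : ℝ :=
  ((mpow A (1 - t) * mpow B t).trace).re

lemma trace_mul_im_eq_zero {J : Type*} [Fintype J] {A B : Matrix J J ℂ}
    (hA : A.IsHermitian) (hB : B.IsHermitian) :
    ((A * B).trace).im = 0 := by
  have h := trace_conjTranspose (A * B)
  rw [conjTranspose_mul, hA.eq, hB.eq, trace_mul_comm] at h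
  have h' := congrArg Complex.im h
  rw [RCLike.star_def, Complex.conj_im] at h'
  linarith

lemma chernoffTrace_pos [Nonempty I] {A B : Matrix I I ℂ} (hA : A.PosDef) (hB : B.PosDef)
    (t : ℝ) : 0 < chernoffTrace A B t := by
  obtain ⟨U, hU, a, ha, h⟩ := (mpow_posDef hB t).exists_eq_conjDiag
  obtain ⟨i₀, -, hi₀⟩ := Finset.exists_min_image Finset.univ a Finset.univ_nonempty
  have hle : (mpow B t - a i₀ • (1 : Matrix I I ℂ)).PosSemidef := by
    rw [h, ← conjDiag_one hU, smul_conjDiag, conjDiag_sub]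
    refine posSemidef_conjDiag U fun i => ?_
    linarith [hi₀ i (Finset.mem_univ i)]
  have h1 := trace_mul_re_le_right (mpow_posDef hA (1 - t)).posSemidef hle
  refine lt_of_lt_of_le ?_ h1
  rw [Matrix.mul_smul, Matrix.mul_one, trace_smul, Complex.smul_re, smul_eq_mul]
  exact mul_pos (ha i₀) (Complex.lt_def.1 (mpow_posDef hA (1 - t)).trace_pos).1

lemma chernoffTrace_mono {A A' B B' : Matrix I I ℂ} (hA : A.PosDef) (hA' : A'.PosDef)
    (hB : B.PosDef) (hB' : B'.PosDef) (hAA' : (A' - A).PosSemidef) (hBB' : (B' - B).PosSemidef)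
    {t : ℝ} (ht : t ∈ Set.Icc (0 : ℝ) 1) : chernoffTrace A B t ≤ chernoffTrace A' B' t := by
  have ht' : 1 - t ∈ Set.Icc (0 : ℝ) 1 := ⟨by linarith [ht.2], by linarith [ht.1]⟩
  exact (trace_mul_re_le_left (mpow_le_mpow hA hA' hAA' ht') (mpow_posDef hB t).posSemidef).trans
    (trace_mul_re_le_right (mpow_posDef hA' _).posSemidef (mpow_le_mpow hB hB' hBB' ht))

lemma chernoffTrace_smul {A B : Matrix I I ℂ} (hA : A.PosDef) (hB : B.PosDef) {c : ℝ}
    (hc : 0 < c) (t : ℝ) : chernoffTrace (c • A) (c • B) t = c * chernoffTrace A B t := by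
  rw [chernoffTrace, mpow_smul hA hc, mpow_smul hB hc, Matrix.smul_mul, Matrix.mul_smul,
    trace_smul, trace_smul, Complex.smul_re, Complex.smul_re, smul_eq_mul, smul_eq_mul,
    ← mul_assoc, ← Real.rpow_add hc, sub_add_cancel, Real.rpow_one, chernoffTrace]

lemma chernoffTrace_tkron {d n k : ℕ} (h : k ≤ n)
    {A B : Matrix (Fin k → Fin d) (Fin k → Fin d) ℂ}
    {A' B' : Matrix (Fin (n - k) → Fin d) (Fin (n - k) → Fin d) ℂ} (hA : A.PosDef)
    (hB : B.PosDef) (hA' : A'.PosDef) (hB' : B'.PosDef) (t : ℝ) :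
    chernoffTrace (tkron h A A') (tkron h B B') t
      = chernoffTrace A B t * chernoffTrace A' B' t := by
  rw [chernoffTrace, mpow_tkron h hA hA', mpow_tkron h hB hB', tkron_mul_tkron, trace_tkron,
    Complex.mul_re, trace_mul_im_eq_zero (mpow_posDef hA _).1 (mpow_posDef hB _).1, zero_mul,
    sub_zero, chernoffTrace, chernoffTrace]

lemma posDef_real_smul {A : Matrix I I ℂ} (hA : A.PosDef) {c : ℝ} (hc : 0 < c) :
    (c • A).PosDef := by
  obtain ⟨U, hU, a, ha, rfl⟩ := hA.exists_eq_conjDiag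
  rw [smul_conjDiag]
  exact posDef_conjDiag hU fun i => mul_pos hc (ha i)

lemma posSemidef_real_smul {A : Matrix I I ℂ} (hA : A.PosSemidef) {c : ℝ} (hc : 0 ≤ c) :
    (c • A).PosSemidef := by
  rw [hA.1.eq_conjDiag, smul_conjDiag]
  exact posSemidef_conjDiag _ fun i => mul_nonneg hc (hA.eigenvalues_nonneg i)

end ChernoffFunction

section Moments

variable {I : Type*} [Fintype I]

/-- The weights `a_i^{1-t} b_j^t |⟨u_i, v_j⟩|²`, which interpolate between the two
Nussbaum–Szkoła distributions of `U diag(a) U*` and `V diag(b) V*`. -/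
noncomputable def tiltedWeight (U V : Matrix I I ℂ) (a b : I → ℝ) (t : ℝ) (x : I × I) : ℝ :=
  a x.1 ^ (1 - t) * b x.2 ^ t * Complex.normSq ((Uᴴ * V) x.1 x.2)

/-- The log-likelihood ratio `log b_j - log a_i`. -/
noncomputable def logRatio (a b : I → ℝ) (x : I × I) : ℝ :=
  Real.log (b x.2) - Real.log (a x.1)

/-- The moments of the log-likelihood ratio under the tilted weights. -/
noncomputable def tiltedMoment (U V : Matrix I I ℂ) (a b : I → ℝ) (t : ℝ) (p : ℕ) : ℝ :=
  ∑ x : I × I, tiltedWeight U V a b t x * logRatio a b x ^ p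

lemma tiltedWeight_nonneg (U V : Matrix I I ℂ) {a b : I → ℝ} (ha : ∀ i, 0 < a i)
    (hb : ∀ i, 0 < b i) (t : ℝ) (x : I × I) : 0 ≤ tiltedWeight U V a b t x :=
  mul_nonneg (mul_nonneg (Real.rpow_nonneg (ha _).le _) (Real.rpow_nonneg (hb _).le _))
    (Complex.normSq_nonneg _)

lemma hasDerivAt_tiltedMoment_zero (U V : Matrix I I ℂ) {a b : I → ℝ} (ha : ∀ i, 0 < a i)
    (hb : ∀ i, 0 < b i) (t : ℝ) :
    HasDerivAt (fun s => tiltedMoment U V a b s 0) (tiltedMoment U V a b t 1) t := by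
  simp only [tiltedMoment]
  refine HasDerivAt.fun_sum fun x _ => ?_
  simp only [pow_zero, mul_one, pow_one, tiltedWeight, logRatio]
  have h1 : HasDerivAt (fun s : ℝ => a x.1 ^ (1 - s))
      (Real.log (a x.1) * (-1) * a x.1 ^ (1 - t)) t :=
    ((hasDerivAt_id t).const_sub 1).const_rpow (ha _)
  have h2 : HasDerivAt (fun s : ℝ => b x.2 ^ s) (Real.log (b x.2) * 1 * b x.2 ^ t) t :=
    (hasDerivAt_id t).const_rpow (hb _)
  refine ((h1.mul h2).mul_const _).congr_deriv ?_
  ring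

lemma rpow_mul_rpow_mul_exp_le_min {a b t : ℝ} (ha : 0 < a) (hb : 0 < b)
    (ht : t ∈ Set.Icc (0 : ℝ) 1) :
    a ^ (1 - t) * b ^ t * Real.exp (-|Real.log b - Real.log a|) ≤ min a b := by
  rw [Real.rpow_def_of_pos ha, Real.rpow_def_of_pos hb, ← Real.exp_add, ← Real.exp_add]
  have h1 := neg_abs_le (Real.log b - Real.log a)
  have h2 := le_abs_self (Real.log b - Real.log a)
  refine le_min ?_ ?_
  · conv_rhs => rw [← Real.exp_log ha]
    refine Real.exp_le_exp.2 ?_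
    nlinarith [ht.1, ht.2, abs_nonneg (Real.log b - Real.log a)]
  · conv_rhs => rw [← Real.exp_log hb]
    refine Real.exp_le_exp.2 ?_
    nlinarith [ht.1, ht.2, abs_nonneg (Real.log b - Real.log a)]

lemma exp_neg_mul_one_sub_le_exp_neg_abs (y : ℝ) {L : ℝ} (hL : 0 < L) :
    Real.exp (-L) * (1 - y ^ 2 / L ^ 2) ≤ Real.exp (-|y|) := by
  rcases le_total |y| L with h | h
  · have h1 : Real.exp (-L) ≤ Real.exp (-|y|) := Real.exp_le_exp.2 (by linarith)
    have h2 : 0 ≤ y ^ 2 / L ^ 2 := by positivity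
    nlinarith [Real.exp_pos (-L)]
  · have h1 : 1 ≤ y ^ 2 / L ^ 2 := by
      rw [one_le_div (by positivity), ← sq_abs y]
      gcongr
    nlinarith [Real.exp_pos (-L), Real.exp_pos (-|y|)]

/-- A lower bound on the overlap of the Nussbaum–Szkoła distributions by a Chebyshev estimate. -/
lemma tiltedMoment_le_sum_min (U V : Matrix I I ℂ) {a b : I → ℝ} (ha : ∀ i, 0 < a i)
    (hb : ∀ i, 0 < b i) {t L : ℝ} (ht : t ∈ Set.Icc (0 : ℝ) 1) (hL : 0 < L) :
    Real.exp (-L) * (tiltedMoment U V a b t 0 - tiltedMoment U V a b t 2 / L ^ 2)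
      ≤ ∑ i, ∑ j, min (a i) (b j) * Complex.normSq ((Uᴴ * V) i j) := by
  rw [← Fintype.sum_prod_type' (fun i j => min (a i) (b j) * Complex.normSq ((Uᴴ * V) i j)),
    tiltedMoment, tiltedMoment, Finset.sum_div, ← Finset.sum_sub_distrib, Finset.mul_sum]
  refine Finset.sum_le_sum fun x _ => ?_
  calc _ = tiltedWeight U V a b t x
        * (Real.exp (-L) * (1 - logRatio a b x ^ 2 / L ^ 2)) := by ring
    _ ≤ tiltedWeight U V a b t x * Real.exp (-|logRatio a b x|) :=
        mul_le_mul_of_nonneg_left (exp_neg_mul_one_sub_le_exp_neg_abs _ hL)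
          (tiltedWeight_nonneg U V ha hb t x)
    _ = (a x.1 ^ (1 - t) * b x.2 ^ t * Real.exp (-|Real.log (b x.2) - Real.log (a x.1)|))
        * Complex.normSq ((Uᴴ * V) x.1 x.2) := by rw [tiltedWeight, logRatio]; ring
    _ ≤ _ := mul_le_mul_of_nonneg_right (rpow_mul_rpow_mul_exp_le_min (ha _) (hb _) ht)
        (Complex.normSq_nonneg _)

variable [DecidableEq I]

lemma chernoffTrace_conjDiag {U V : Matrix I I ℂ} (hU : U ∈ unitaryGroup I ℂ)
    (hV : V ∈ unitaryGroup I ℂ) {a b : I → ℝ} (ha : ∀ i, 0 < a i) (hb : ∀ i, 0 < b i) (t : ℝ) :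
    chernoffTrace (conjDiag U a) (conjDiag V b) t = tiltedMoment U V a b t 0 := by
  rw [chernoffTrace, mpow_conjDiag hU ha, mpow_conjDiag hV hb, trace_conjDiag_mul_conjDiag,
    tiltedMoment, Fintype.sum_prod_type]
  simp [tiltedWeight]

lemma continuous_chernoffTrace {A B : Matrix I I ℂ} (hA : A.PosDef) (hB : B.PosDef) :
    Continuous (chernoffTrace A B) := by
  obtain ⟨U, hU, a, ha, rfl⟩ := hA.exists_eq_conjDiag
  obtain ⟨V, hV, b, hb, rfl⟩ := hB.exists_eq_conjDiag
  rw [funext (chernoffTrace_conjDiag hU hV ha hb)]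
  exact continuous_iff_continuousAt.2 fun t => (hasDerivAt_tiltedMoment_zero U V ha hb t).continuousAt

lemma mpow_zero {A : Matrix I I ℂ} (hA : A.PosDef) : mpow A 0 = 1 := by
  rw [mpow_eq_conjDiag hA]
  simp only [Real.rpow_zero]
  exact conjDiag_one hA.1.eigenvectorUnitary.2

/-- For two density matrices the mean of the log-likelihood ratio vanishes under some tilt. -/
lemma exists_tiltedMoment_one_eq_zero {U V : Matrix I I ℂ} (hU : U ∈ unitaryGroup I ℂ)
    (hV : V ∈ unitaryGroup I ℂ) {a b : I → ℝ} (ha : ∀ i, 0 < a i) (hb : ∀ i, 0 < b i)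
    (hA : (conjDiag U a).trace = 1) (hB : (conjDiag V b).trace = 1) :
    ∃ t ∈ Set.Ioo (0 : ℝ) 1, tiltedMoment U V a b t 1 = 0 := by
  have hd := hasDerivAt_tiltedMoment_zero U V ha hb
  have hA' := posDef_conjDiag hU ha
  have hB' := posDef_conjDiag hV hb
  refine exists_hasDerivAt_eq_zero zero_lt_one
    (fun t _ => (hd t).continuousAt.continuousWithinAt) ?_ fun t _ => hd t
  rw [← chernoffTrace_conjDiag hU hV ha hb, ← chernoffTrace_conjDiag hU hV ha hb, chernoffTrace,
    chernoffTrace, sub_zero, sub_self, mpow_one hA', mpow_one hB', mpow_zero hA', mpow_zero hB',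
    Matrix.mul_one, Matrix.one_mul, hA, hB]

end Moments

section TensorMoments

variable {d n k : ℕ}

/-- The identification of pairs of multi-indices of length `n` with quadruples. -/
def splitPairEquiv (d : ℕ) {n k : ℕ} (h : k ≤ n) :
    (Fin n → Fin d) × (Fin n → Fin d) ≃
      ((Fin k → Fin d) × (Fin k → Fin d)) × ((Fin (n - k) → Fin d) × (Fin (n - k) → Fin d)) :=
  ((splitEquiv d h).prodCongr (splitEquiv d h)).trans (Equiv.prodProdProdComm _ _ _ _)

variable (h : k ≤ n) (U V : Matrix (Fin k → Fin d) (Fin k → Fin d) ℂ)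
  (U' V' : Matrix (Fin (n - k) → Fin d) (Fin (n - k) → Fin d) ℂ)
  {a b : (Fin k → Fin d) → ℝ} {a' b' : (Fin (n - k) → Fin d) → ℝ} {c : ℝ}

lemma tiltedWeight_tkron (hc : 0 < c) (ha : ∀ i, 0 < a i) (hb : ∀ i, 0 < b i)
    (ha' : ∀ i, 0 < a' i) (hb' : ∀ i, 0 < b' i) (t : ℝ)
    (x : (Fin n → Fin d) × (Fin n → Fin d)) :
    tiltedWeight (tkron h U U') (tkron h V V') (fun i => c * tensorSpectrum h a a' i)
        (fun i => c * tensorSpectrum h b b' i) t x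
      = c * (tiltedWeight U V a b t (splitPairEquiv d h x).1
        * tiltedWeight U' V' a' b' t (splitPairEquiv d h x).2) := by
  simp only [tiltedWeight, conjTranspose_tkron, tkron_mul_tkron, tkron_apply, tensorSpectrum,
    splitPairEquiv, Complex.normSq_mul, Equiv.trans_apply, Equiv.prodCongr_apply, Prod.map,
    Equiv.prodProdProdComm_apply]
  have hcc : c ^ (1 - t) * c ^ t = c := by
    rw [← Real.rpow_add hc, sub_add_cancel, Real.rpow_one]
  rw [Real.mul_rpow hc.le (mul_pos (ha _) (ha' _)).le, Real.mul_rpow (ha _).le (ha' _).le,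
    Real.mul_rpow hc.le (mul_pos (hb _) (hb' _)).le, Real.mul_rpow (hb _).le (hb' _).le]
  linear_combination (a (splitEquiv d h x.1).1 ^ (1 - t) * a' (splitEquiv d h x.1).2 ^ (1 - t)
    * (b (splitEquiv d h x.2).1 ^ t * b' (splitEquiv d h x.2).2 ^ t)
    * (Complex.normSq ((Uᴴ * V) (splitEquiv d h x.1).1 (splitEquiv d h x.2).1)
      * Complex.normSq ((U'ᴴ * V') (splitEquiv d h x.1).2 (splitEquiv d h x.2).2))) * hcc

lemma logRatio_tkron (hc : 0 < c) (ha : ∀ i, 0 < a i) (hb : ∀ i, 0 < b i)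
    (ha' : ∀ i, 0 < a' i) (hb' : ∀ i, 0 < b' i) (x : (Fin n → Fin d) × (Fin n → Fin d)) :
    logRatio (fun i => c * tensorSpectrum h a a' i) (fun i => c * tensorSpectrum h b b' i) x
      = logRatio a b (splitPairEquiv d h x).1 + logRatio a' b' (splitPairEquiv d h x).2 := by
  simp only [logRatio, tensorSpectrum, splitPairEquiv, Equiv.trans_apply, Equiv.prodCongr_apply,
    Prod.map, Equiv.prodProdProdComm_apply]
  rw [Real.log_mul hc.ne' (mul_pos (ha _) (ha' _)).ne', Real.log_mul (ha _).ne' (ha' _).ne',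
    Real.log_mul hc.ne' (mul_pos (hb _) (hb' _)).ne', Real.log_mul (hb _).ne' (hb' _).ne']
  ring

lemma tiltedMoment_zero_tkron (hc : 0 < c) (ha : ∀ i, 0 < a i) (hb : ∀ i, 0 < b i)
    (ha' : ∀ i, 0 < a' i) (hb' : ∀ i, 0 < b' i) (t : ℝ) :
    tiltedMoment (tkron h U U') (tkron h V V') (fun i => c * tensorSpectrum h a a' i)
        (fun i => c * tensorSpectrum h b b' i) t 0
      = c * (tiltedMoment U V a b t 0 * tiltedMoment U' V' a' b' t 0) := by
  simp only [tiltedMoment, tiltedWeight_tkron h U V U' V' hc ha hb ha' hb', pow_zero, mul_one]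
  rw [Equiv.sum_comp (splitPairEquiv d h) fun p =>
      c * (tiltedWeight U V a b t p.1 * tiltedWeight U' V' a' b' t p.2),
    ← Finset.mul_sum, Finset.sum_mul_sum, Fintype.sum_prod_type]

lemma tiltedMoment_two_tkron (hc : 0 < c) (ha : ∀ i, 0 < a i) (hb : ∀ i, 0 < b i)
    (ha' : ∀ i, 0 < a' i) (hb' : ∀ i, 0 < b' i) (t : ℝ) :
    tiltedMoment (tkron h U U') (tkron h V V') (fun i => c * tensorSpectrum h a a' i)
        (fun i => c * tensorSpectrum h b b' i) t 2
      = c * (tiltedMoment U V a b t 2 * tiltedMoment U' V' a' b' t 0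
        + 2 * (tiltedMoment U V a b t 1 * tiltedMoment U' V' a' b' t 1)
        + tiltedMoment U V a b t 0 * tiltedMoment U' V' a' b' t 2) := by
  simp only [tiltedMoment, tiltedWeight_tkron h U V U' V' hc ha hb ha' hb',
    logRatio_tkron h hc ha hb ha' hb']
  rw [Equiv.sum_comp (splitPairEquiv d h) fun p =>
      c * (tiltedWeight U V a b t p.1 * tiltedWeight U' V' a' b' t p.2)
        * (logRatio a b p.1 + logRatio a' b' p.2) ^ 2]
  conv_lhs => rw [Fintype.sum_prod_type]
  rw [Finset.sum_mul_sum, Finset.sum_mul_sum, Finset.sum_mul_sum]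
  simp only [Finset.mul_sum, ← Finset.sum_add_distrib]
  refine Finset.sum_congr rfl fun x _ => Finset.sum_congr rfl fun y _ => ?_
  ring

/-- `A` and `B` dominate positive definite matrices whose log-likelihood ratio, tilted by `t`, has
total mass at least `Z` and second moment at most `W` times that mass. -/
def HasTiltedLowerBound {I : Type*} [Fintype I] [DecidableEq I] (A B : Matrix I I ℂ)
    (t Z W : ℝ) : Prop :=
  ∃ U ∈ unitaryGroup I ℂ, ∃ V ∈ unitaryGroup I ℂ, ∃ a b : I → ℝ,
    (∀ i, 0 < a i) ∧ (∀ i, 0 < b i) ∧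
    (A - conjDiag U a).PosSemidef ∧ (B - conjDiag V b).PosSemidef ∧
    Z ≤ tiltedMoment U V a b t 0 ∧
    tiltedMoment U V a b t 2 ≤ W * tiltedMoment U V a b t 0

lemma HasTiltedLowerBound.le_Pmin {I : Type*} [Fintype I] [DecidableEq I] {A B : Matrix I I ℂ}
    {t Z W : ℝ} (hAB : HasTiltedLowerBound A B t Z W) (hZ : 0 ≤ Z)
    (ht : t ∈ Set.Icc (0 : ℝ) 1) {L : ℝ} (hL : 0 < L) (hWL : 2 * W ≤ L ^ 2) :
    (1 / 8) * Real.exp (-L) * Z ≤ Pmin A B := by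
  obtain ⟨U, hU, V, hV, a, b, ha, hb, hA, hB, h0, h2⟩ := hAB
  refine le_trans ?_ (sum_min_le_Pmin hU hV (fun i => (ha i).le) (fun i => (hb i).le) hA hB)
  have h1 := tiltedMoment_le_sum_min U V ha hb ht hL
  have h3 : tiltedMoment U V a b t 2 / L ^ 2 ≤ tiltedMoment U V a b t 0 / 2 := by
    rw [div_le_iff₀ (by positivity)]
    nlinarith [hZ.trans h0]
  have h4 : Real.exp (-L) * (Z / 2)
      ≤ Real.exp (-L) * (tiltedMoment U V a b t 0 - tiltedMoment U V a b t 2 / L ^ 2) :=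
    mul_le_mul_of_nonneg_left (by linarith) (Real.exp_pos _).le
  linarith

lemma HasTiltedLowerBound.tkron {A B : Matrix (Fin n → Fin d) (Fin n → Fin d) ℂ}
    {A' B' : Matrix (Fin (n - k) → Fin d) (Fin (n - k) → Fin d) ℂ} {t Z W v : ℝ}
    (hAB : HasTiltedLowerBound A' B' t Z W) (hc : 0 < c)
    (hU : U ∈ unitaryGroup (Fin k → Fin d) ℂ) (hV : V ∈ unitaryGroup (Fin k → Fin d) ℂ)
    (ha : ∀ i, 0 < a i) (hb : ∀ i, 0 < b i)
    (h1 : tiltedMoment U V a b t 1 = 0) (h0 : 0 ≤ tiltedMoment U V a b t 0)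
    (h2 : tiltedMoment U V a b t 2 ≤ v * tiltedMoment U V a b t 0) (hZ : 0 ≤ Z)
    (hA : (A - c • tkron h (conjDiag U a) A').PosSemidef)
    (hB : (B - c • tkron h (conjDiag V b) B').PosSemidef) :
    HasTiltedLowerBound A B t (c * tiltedMoment U V a b t 0 * Z) (v + W) := by
  obtain ⟨U', hU', V', hV', a', b', ha', hb', hA', hB', h0', h2'⟩ := hAB
  have key : ∀ {M : Matrix (Fin n → Fin d) (Fin n → Fin d) ℂ}
      {M' S' : Matrix (Fin (n - k) → Fin d) (Fin (n - k) → Fin d) ℂ}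
      {S : Matrix (Fin k → Fin d) (Fin k → Fin d) ℂ} {f : (Fin k → Fin d) → ℝ}
      {f' : (Fin (n - k) → Fin d) → ℝ}, (∀ i, 0 < f i) →
      (M - c • _root_.tkron h (conjDiag S f) M').PosSemidef →
      (M' - conjDiag S' f').PosSemidef →
      (M - conjDiag (_root_.tkron h S S') (fun i => c * tensorSpectrum h f f' i)).PosSemidef := by
    intro M M' S' S f f' hf hM hM'
    have h3 := posSemidef_real_smul (posSemidef_tkron h (posSemidef_conjDiag S fun i => (hf i).le)
      hM') hc.le
    rw [tkron_sub_right, smul_sub, tkron_conjDiag, smul_conjDiag] at h3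
    simpa using hM.add h3
  refine ⟨_, tkron_mem_unitaryGroup h hU hU', _, tkron_mem_unitaryGroup h hV hV', _, _,
    fun i => mul_pos hc (tensorSpectrum_pos h ha ha' i),
    fun i => mul_pos hc (tensorSpectrum_pos h hb hb' i), key ha hA hA', key hb hB hB', ?_, ?_⟩
  · rw [tiltedMoment_zero_tkron h U V U' V' hc ha hb ha' hb', mul_assoc]
    gcongr
  · rw [tiltedMoment_zero_tkron h U V U' V' hc ha hb ha' hb',
      tiltedMoment_two_tkron h U V U' V' hc ha hb ha' hb', h1]
    have e1 := mul_le_mul_of_nonneg_right h2 (hZ.trans h0')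
    have e2 := mul_le_mul_of_nonneg_left h2' h0
    have e3 := mul_le_mul_of_nonneg_left (add_le_add e1 e2) hc.le
    linarith

lemma hasTiltedLowerBound_self {I : Type*} [Fintype I] [DecidableEq I] [Nonempty I]
    {A B : Matrix I I ℂ} (hA : A.PosDef) (hB : B.PosDef) (t : ℝ) :
    ∃ W, 0 ≤ W ∧ HasTiltedLowerBound A B t (chernoffTrace A B t) W := by
  have hpos := chernoffTrace_pos hA hB t
  obtain ⟨U, hU, a, ha, rfl⟩ := hA.exists_eq_conjDiag
  obtain ⟨V, hV, b, hb, rfl⟩ := hB.exists_eq_conjDiag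
  rw [chernoffTrace_conjDiag hU hV ha hb] at hpos ⊢
  refine ⟨tiltedMoment U V a b t 2 / tiltedMoment U V a b t 0, div_nonneg ?_ hpos.le, U, hU, V, hV,
    a, b, ha, hb, by simpa using PosSemidef.zero, by simpa using PosSemidef.zero, le_rfl,
    (div_mul_cancel₀ _ hpos.ne').ge⟩
  exact Finset.sum_nonneg fun x _ => mul_nonneg (tiltedWeight_nonneg U V ha hb t x) (sq_nonneg _)

end TensorMoments

section AlmostAdditive

lemma exists_tendsto_div_of_almostAdditive_le {f : ℕ → ℝ} {K : ℝ} (hK : 0 ≤ K)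
    (h : ∀ k m, 0 < k → 0 < m → |f (k + m) - f k - f m| ≤ K) :
    ∃ c, Tendsto (fun n : ℕ => f n / n) atTop (nhds c) ∧ ∀ n : ℕ, 0 < n → n * c ≤ f n + K := by
  set u : ℕ → ℝ := fun n => if n = 0 then 0 else f n + K with hu
  have hsub : Subadditive u := by
    intro k m
    rcases Nat.eq_zero_or_pos k with rfl | hk
    · simp [hu]
    rcases Nat.eq_zero_or_pos m with rfl | hm
    · simp [hu]
    have := (abs_le.1 (h k m hk hm)).2
    simp only [hu, hk.ne', hm.ne', if_false, (Nat.add_pos_left hk m).ne']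
    linarith
  have hlow : ∀ n : ℕ, 0 < n → n * (f 1 - K) ≤ f n := by
    intro n hn
    induction n, hn using Nat.le_induction with
    | base => simpa using hK
    | succ n hn ih =>
      have := (abs_le.1 (h n 1 hn one_pos)).1
      push_cast
      linarith
  have hbdd : BddBelow (Set.range fun n : ℕ => u n / n) := by
    refine ⟨min (f 1 - K) 0, ?_⟩
    rintro _ ⟨n, rfl⟩
    rcases Nat.eq_zero_or_pos n with rfl | hn
    · simp
    · have hn' : (0 : ℝ) < n := by exact_mod_cast hn
      refine (min_le_left _ _).trans ?_
      simp only [hu, hn.ne', if_false]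
      rw [le_div_iff₀ hn']
      linarith [hlow n hn]
  refine ⟨hsub.lim, ?_, fun n hn => ?_⟩
  · have h1 := hsub.tendsto_lim hbdd
    have h2 := tendsto_const_div_atTop_nhds_zero_nat K
    have h3 := h1.sub h2
    rw [sub_zero] at h3
    refine h3.congr' ?_
    filter_upwards [eventually_gt_atTop 0] with n hn
    simp only [hu, hn.ne', if_false]
    ring
  · have h1 := hsub.lim_le_div hbdd hn.ne'
    have hn' : (0 : ℝ) < n := by exact_mod_cast hn
    simp only [hu, hn.ne', if_false] at h1
    rw [le_div_iff₀ hn'] at h1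
    linarith

/-- An almost additive sequence grows linearly, with bounded error. -/
lemma exists_tendsto_div_of_almostAdditive {f : ℕ → ℝ} {K : ℝ} (hK : 0 ≤ K)
    (h : ∀ k m, 0 < k → 0 < m → |f (k + m) - f k - f m| ≤ K) :
    ∃ c, Tendsto (fun n : ℕ => f n / n) atTop (nhds c) ∧
      ∀ n : ℕ, 0 < n → |f n - n * c| ≤ K := by
  obtain ⟨c, hc, hc'⟩ := exists_tendsto_div_of_almostAdditive_le hK h
  obtain ⟨e, he, he'⟩ := exists_tendsto_div_of_almostAdditive_le (f := fun n => -f n) hK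
    fun k m hk hm => by
      rw [← abs_neg]
      convert h k m hk hm using 2
      ring
  have hec : e = -c := by
    refine tendsto_nhds_unique he (hc.neg.congr fun n => ?_)
    ring
  refine ⟨c, hc, fun n hn => abs_le.2 ⟨by linarith [hc' n hn], ?_⟩⟩
  have := he' n hn
  rw [hec] at this
  linarith

end AlmostAdditive

section FactorizingStates

variable {d : ℕ} {ω σ : (n : ℕ) → Matrix (Fin n → Fin d) (Fin n → Fin d) ℂ} {α β : ℝ}

lemma LowerFact.posDef (hα : 0 < α) (hω : LowerFact ω α) (h1 : (ω 1).PosDef) :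
    ∀ n, 1 ≤ n → (ω n).PosDef := by
  intro n hn
  induction n, hn using Nat.le_induction with
  | base => exact h1
  | succ n hn ih =>
    have h2 := posDef_real_smul (posDef_tkron (n := n + 1) (k := 1) (by omega) h1 ih) hα
    simpa using h2.add_posSemidef (hω (n + 1) 1 one_pos (by omega))

/-- The log of `Tr ω_n^{1-t} σ_n^t` is almost additive. -/
lemma abs_log_chernoffTrace_sub_le (hd : 0 < d) (hα0 : 0 < α) (hα1 : α ≤ 1) (hβ : 1 ≤ β)
    (hω : ∀ n, 1 ≤ n → (ω n).PosDef) (hσ : ∀ n, 1 ≤ n → (σ n).PosDef)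
    (hωu : UpperFact ω β) (hσu : UpperFact σ β) (hωl : LowerFact ω α) (hσl : LowerFact σ α)
    {t : ℝ} (ht : t ∈ Set.Icc (0 : ℝ) 1) (k m : ℕ) (hk : 0 < k) (hm : 0 < m) :
    |Real.log (chernoffTrace (ω (k + m)) (σ (k + m)) t) - Real.log (chernoffTrace (ω k) (σ k) t)
      - Real.log (chernoffTrace (ω m) (σ m) t)| ≤ Real.log β - Real.log α := by
  obtain ⟨n, hn⟩ : ∃ n, n = k + m := ⟨_, rfl⟩
  rw [← hn]
  obtain rfl : m = n - k := by omega
  have hkn : k < n := by omega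
  have : Nonempty (Fin d) := ⟨⟨0, hd⟩⟩
  have hβ0 : 0 < β := by linarith
  have hpk := chernoffTrace_pos (hω k hk) (hσ k hk) t
  have hpm := chernoffTrace_pos (hω (n - k) hm) (hσ (n - k) hm) t
  have hpn := chernoffTrace_pos (hω n (by omega)) (hσ n (by omega)) t
  have hωt := posDef_tkron hkn.le (hω k hk) (hω (n - k) hm)
  have hσt := posDef_tkron hkn.le (hσ k hk) (hσ (n - k) hm)
  have hup := chernoffTrace_mono (hω n (by omega)) (posDef_real_smul hωt hβ0) (hσ n (by omega))
    (posDef_real_smul hσt hβ0) (hωu n k hk hkn) (hσu n k hk hkn) ht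
  have hlo := chernoffTrace_mono (posDef_real_smul hωt hα0) (hω n (by omega))
    (posDef_real_smul hσt hα0) (hσ n (by omega)) (hωl n k hk hkn) (hσl n k hk hkn) ht
  rw [chernoffTrace_smul hωt hσt hβ0,
    chernoffTrace_tkron hkn.le (hω k hk) (hσ k hk) (hω (n - k) hm) (hσ (n - k) hm)] at hup
  rw [chernoffTrace_smul hωt hσt hα0,
    chernoffTrace_tkron hkn.le (hω k hk) (hσ k hk) (hω (n - k) hm) (hσ (n - k) hm)] at hlo
  have hup' := Real.log_le_log hpn hup
  have hlo' := Real.log_le_log (mul_pos hα0 (mul_pos hpk hpm)) hlo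
  rw [Real.log_mul hβ0.ne' (mul_pos hpk hpm).ne', Real.log_mul hpk.ne' hpm.ne'] at hup'
  rw [Real.log_mul hα0.ne' (mul_pos hpk hpm).ne', Real.log_mul hpk.ne' hpm.ne'] at hlo'
  have hlα := Real.log_nonpos hα0.le hα1
  have hlβ := Real.log_nonneg hβ
  rw [abs_le]
  constructor <;> linarith

lemma HasTiltedLowerBound.mono {I : Type*} [Fintype I] [DecidableEq I] {A B : Matrix I I ℂ}
    {t Z Z' W W' : ℝ} (h : HasTiltedLowerBound A B t Z W) (hZ' : 0 ≤ Z') (hZ : Z' ≤ Z)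
    (hW : W ≤ W') : HasTiltedLowerBound A B t Z' W' := by
  obtain ⟨U, hU, V, hV, a, b, ha, hb, hA, hB, h0, h2⟩ := h
  exact ⟨U, hU, V, hV, a, b, ha, hb, hA, hB, hZ.trans h0,
    h2.trans (mul_le_mul_of_nonneg_right hW (hZ'.trans (hZ.trans h0)))⟩

lemma exists_hasTiltedLowerBound_of_le (hd : 0 < d) (hω : ∀ n, 1 ≤ n → (ω n).PosDef)
    (hσ : ∀ n, 1 ≤ n → (σ n).PosDef) (t : ℝ) (m : ℕ) :
    ∃ Z W, 0 < Z ∧ 0 ≤ W ∧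
      ∀ n, 0 < n → n ≤ m → HasTiltedLowerBound (ω n) (σ n) t Z W := by
  have : Nonempty (Fin d) := ⟨⟨0, hd⟩⟩
  induction m with
  | zero => exact ⟨1, 0, one_pos, le_rfl, fun n h1 h2 => by omega⟩
  | succ m ih =>
    obtain ⟨Z, W, hZ, hW, h⟩ := ih
    obtain ⟨W', hW', h'⟩ :=
      hasTiltedLowerBound_self (hω (m + 1) (by omega)) (hσ (m + 1) (by omega)) t
    have hZ' := chernoffTrace_pos (hω (m + 1) (by omega)) (hσ (m + 1) (by omega)) t
    refine ⟨min Z (chernoffTrace (ω (m + 1)) (σ (m + 1)) t), max W W', lt_min hZ hZ',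
      hW.trans (le_max_left _ _), fun n h1 h2 => ?_⟩
    rcases Nat.le_or_eq_of_le_succ h2 with h3 | rfl
    · exact (h n h1 h3).mono (lt_min hZ hZ').le (min_le_left _ _) (le_max_left _ _)
    · exact h'.mono (lt_min hZ hZ').le (min_le_right _ _) (le_max_right _ _)

/-- Iterating lower factorization in blocks of length `m`: the second moment of the log-likelihood
ratio grows only linearly if its mean vanishes on a block. -/
lemma exists_hasTiltedLowerBound (hd : 0 < d) (hα0 : 0 < α)
    (hω : ∀ n, 1 ≤ n → (ω n).PosDef) (hσ : ∀ n, 1 ≤ n → (σ n).PosDef)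
    (hωl : LowerFact ω α) (hσl : LowerFact σ α) {m : ℕ} (hm : 0 < m)
    (hωm : (ω m).trace = 1) (hσm : (σ m).trace = 1) :
    ∃ t ∈ Set.Icc (0 : ℝ) 1, ∃ Z W v, 0 < Z ∧ 0 ≤ W ∧ 0 ≤ v ∧
      ∀ j n : ℕ, j * m < n → n ≤ (j + 1) * m →
        HasTiltedLowerBound (ω n) (σ n) t ((α * chernoffTrace (ω m) (σ m) t) ^ j * Z)
          (j * v + W) := by
  have : Nonempty (Fin d) := ⟨⟨0, hd⟩⟩
  obtain ⟨U, hU, a, ha, hUa⟩ := (hω m hm).exists_eq_conjDiag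
  obtain ⟨V, hV, b, hb, hVb⟩ := (hσ m hm).exists_eq_conjDiag
  obtain ⟨t, ht, h1⟩ := exists_tiltedMoment_one_eq_zero hU hV ha hb (hUa ▸ hωm) (hVb ▸ hσm)
  have hq : chernoffTrace (ω m) (σ m) t = tiltedMoment U V a b t 0 := by
    rw [hUa, hVb, chernoffTrace_conjDiag hU hV ha hb]
  have hpos := chernoffTrace_pos (hω m hm) (hσ m hm) t
  obtain ⟨Z, W, hZ, hW, hbase⟩ := exists_hasTiltedLowerBound_of_le hd hω hσ t m
  have hv : 0 ≤ tiltedMoment U V a b t 2 / tiltedMoment U V a b t 0 := by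
    refine div_nonneg (Finset.sum_nonneg fun x _ => ?_) (hq ▸ hpos.le)
    exact mul_nonneg (tiltedWeight_nonneg U V ha hb t x) (sq_nonneg _)
  refine ⟨t, ⟨ht.1.le, ht.2.le⟩, Z, W, tiltedMoment U V a b t 2 / tiltedMoment U V a b t 0, hZ, hW,
    hv, fun j => ?_⟩
  induction j with
  | zero =>
    intro n hn hn'
    simpa using hbase n (by omega) (by omega)
  | succ j ih =>
    intro n hn hn'
    rw [Nat.succ_mul] at hn hn'
    have hmn : m < n := by
      have := Nat.zero_le (j * m)
      omega
    have hprev := ih (n - m) (by omega) (by omega)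
    have hA := hωl n m hm hmn
    have hB := hσl n m hm hmn
    have hA' : (ω n - α • tkron hmn.le (conjDiag U a) (ω (n - m))).PosSemidef := hUa ▸ hA
    have hB' : (σ n - α • tkron hmn.le (conjDiag V b) (σ (n - m))).PosSemidef := hVb ▸ hB
    have hstep := hprev.tkron hmn.le U V hα0 hU hV ha hb h1 (hq ▸ hpos.le)
      (div_mul_cancel₀ _ (hq ▸ hpos.ne')).ge (by positivity) hA' hB'
    convert hstep using 1
    · rw [hq]; ring
    · push_cast; ring

/-- The lower bound on the error exponent obtained from blocks of length `m`. -/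
lemma exists_le_log_Pmin (hd : 0 < d) (hα0 : 0 < α)
    (hω : ∀ n, 1 ≤ n → (ω n).PosDef) (hσ : ∀ n, 1 ≤ n → (σ n).PosDef)
    (hωl : LowerFact ω α) (hσl : LowerFact σ α) {m : ℕ} (hm : 0 < m)
    (hωm : (ω m).trace = 1) (hσm : (σ m).trace = 1) :
    ∃ t ∈ Set.Icc (0 : ℝ) 1, ∃ D E : ℝ, ∀ n : ℕ, 0 < n → 0 < Pmin (ω n) (σ n) ∧
      n * ((Real.log α + Real.log (chernoffTrace (ω m) (σ m) t)) / m) - D * √n - E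
        ≤ Real.log (Pmin (ω n) (σ n)) := by
  have : Nonempty (Fin d) := ⟨⟨0, hd⟩⟩
  obtain ⟨t, ht, Z, W, v, hZ, hW, hv, hlow⟩ :=
    exists_hasTiltedLowerBound hd hα0 hω hσ hωl hσl hm hωm hσm
  have hq := chernoffTrace_pos (hω m hm) (hσ m hm) t
  set q := chernoffTrace (ω m) (σ m) t
  set l := Real.log α + Real.log q
  refine ⟨t, ht, √(2 * (v + W)) + 1, |l| - Real.log Z - Real.log (1 / 8), fun n hn => ?_⟩
  set D := √(2 * (v + W)) + 1
  have hm' : (0 : ℝ) < m := by exact_mod_cast hm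
  have hn' : (1 : ℝ) ≤ n := by exact_mod_cast hn
  set j := (n - 1) / m
  have hj1 : j * m < n := by
    have : j * m ≤ n - 1 := Nat.div_mul_le_self (n - 1) m
    omega
  have hj2 : n ≤ (j + 1) * m := by
    have : n - 1 < m * (j + 1) := Nat.lt_mul_div_succ (n - 1) hm
    rw [mul_comm]
    omega
  have hj1' : (j : ℝ) * m ≤ n := by exact_mod_cast hj1.le
  have hj2' : (n : ℝ) ≤ (j + 1) * m := by exact_mod_cast hj2
  have hjn : (j : ℝ) ≤ n := by exact_mod_cast (Nat.div_le_self (n - 1) m).trans (Nat.sub_le n 1)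
  have hD : 0 < D := by positivity
  have hL : 0 < D * √n := by positivity
  have hD2 : 2 * (v + W) ≤ D ^ 2 := by
    have h1 : √(2 * (v + W)) ^ 2 = 2 * (v + W) := Real.sq_sqrt (by positivity)
    have h2 := Real.sqrt_nonneg (2 * (v + W))
    simp only [D]
    nlinarith
  have hWL : 2 * (j * v + W) ≤ (D * √n) ^ 2 := by
    rw [mul_pow, Real.sq_sqrt (by linarith)]
    have h1 : (j : ℝ) * v ≤ n * v := mul_le_mul_of_nonneg_right hjn hv
    have h2 : W ≤ n * W := le_mul_of_one_le_left hW hn'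
    have h3 := mul_le_mul_of_nonneg_right hD2 (zero_le_one.trans hn')
    linarith
  have hZj : 0 < (α * q) ^ j * Z := by positivity
  have hP := (hlow j n hj1 hj2).le_Pmin hZj.le ht hL hWL
  have hP0 : 0 < 1 / 8 * Real.exp (-(D * √n)) * ((α * q) ^ j * Z) := by positivity
  refine ⟨hP0.trans_le hP, le_trans ?_ (Real.log_le_log hP0 hP)⟩
  rw [Real.log_mul (by positivity) hZj.ne', Real.log_mul (by norm_num) (Real.exp_pos _).ne',
    Real.log_exp, Real.log_mul (by positivity) hZ.ne', Real.log_pow,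
    Real.log_mul hα0.ne' hq.ne']
  have hfloor : (n : ℝ) * (l / m) - |l| ≤ j * l := by
    have h1 : |(n : ℝ) / m - j| ≤ 1 := by
      rw [abs_le]
      constructor
      · have := (le_div_iff₀ hm').2 hj1'
        linarith
      · have := (div_le_iff₀ hm').2 hj2'
        linarith
    have h2 : ((n : ℝ) / m - j) * l ≤ |l| := by
      refine (le_abs_self _).trans ?_
      rw [abs_mul]
      exact mul_le_of_le_one_left (abs_nonneg _) h1
    have h3 : (n : ℝ) * (l / m) = (n / m) * l := by ring
    linarith
  linarith

end FactorizingStates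

/-- Chernoff bound under upper and lower factorization. -/
theorem chernoff_bound_of_upper_and_lowerFact
    (d : ℕ)
    (ω σ : (n : ℕ) → Matrix (Fin n → Fin d) (Fin n → Fin d) ℂ)
    (hω : ∀ n, 1 ≤ n → (ω n).PosSemidef ∧ (ω n).trace = 1)
    (hσ : ∀ n, 1 ≤ n → (σ n).PosSemidef ∧ (σ n).trace = 1)
    (β : ℝ) (hβ : 1 ≤ β) (hωfu : UpperFact ω β) (hσfu : UpperFact σ β)
    (α : ℝ) (hα0 : 0 < α) (hα1 : α ≤ 1) (hωfl : LowerFact ω α) (hσfl : LowerFact σ α)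
    (hω1 : (ω 1).PosDef) (hσ1 : (σ 1).PosDef) :
    ∃ C : ℝ → ℝ,
      (∀ t ∈ Set.Icc (0 : ℝ) 1,
        Tendsto
          (fun n : ℕ =>
            (1 / (n : ℝ)) * Real.log (((mpow (ω n) (1 - t) * mpow (σ n) t).trace).re))
          atTop (nhds (C t))) ∧
      ContinuousOn C (Set.Icc (0 : ℝ) 1) ∧
      ∃ t₀ ∈ Set.Icc (0 : ℝ) 1,
        (∀ t ∈ Set.Icc (0 : ℝ) 1, C t₀ ≤ C t) ∧
        Tendsto (fun n : ℕ => (1 / (n : ℝ)) * Real.log (Pmin (ω n) (σ n)))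
          atTop (nhds (C t₀)) := by
  have hd : 0 < d := by
    rcases Nat.eq_zero_or_pos d with rfl | h
    · have h1 := (hω 1 le_rfl).2
      simp [Matrix.trace] at h1
    · exact h
  have : Nonempty (Fin d) := ⟨⟨0, hd⟩⟩
  have hωp := hωfl.posDef hα0 hω1
  have hσp := hσfl.posDef hα0 hσ1
  set K := Real.log β - Real.log α with hKdef
  have hK : 0 ≤ K := by
    have h1 := Real.log_nonneg hβ
    have h2 := Real.log_nonpos hα0.le hα1
    linarith
  set f : ℕ → ℝ → ℝ := fun n t => Real.log (chernoffTrace (ω n) (σ n) t) with hf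
  have hlim : ∀ t ∈ Set.Icc (0 : ℝ) 1, ∃ c, Tendsto (fun n => f n t / n) atTop (nhds c) ∧
      ∀ n : ℕ, 0 < n → |f n t - n * c| ≤ K := fun t ht =>
    exists_tendsto_div_of_almostAdditive hK
      (abs_log_chernoffTrace_sub_le hd hα0 hα1 hβ hωp hσp hωfu hσfu hωfl hσfl ht)
  choose! C hC hCK using hlim
  have hcont : ContinuousOn C (Set.Icc (0 : ℝ) 1) := by
    have hunif : TendstoUniformlyOn (fun (n : ℕ) t => f n t / n) C atTop (Set.Icc (0 : ℝ) 1) := by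
      rw [Metric.tendstoUniformlyOn_iff]
      intro ε hε
      filter_upwards [(tendsto_const_div_atTop_nhds_zero_nat K).eventually_lt_const hε,
        eventually_gt_atTop 0] with n hn hn0 t ht
      have hn' : (0 : ℝ) < n := by exact_mod_cast hn0
      rw [dist_comm, Real.dist_eq]
      refine lt_of_le_of_lt ?_ hn
      rw [le_div_iff₀ hn']
      calc |f n t / n - C t| * n = |f n t / n - C t| * |(n : ℝ)| := by rw [abs_of_pos hn']
        _ = |f n t - n * C t| := by rw [← abs_mul]; congr 1; field_simp
        _ ≤ K := hCK t ht n hn0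
    refine hunif.continuousOn (Eventually.frequently ?_)
    filter_upwards [eventually_ge_atTop 1] with n hn
    exact ((continuous_chernoffTrace (hωp n hn) (hσp n hn)).log
      (fun t => (chernoffTrace_pos (hωp n hn) (hσp n hn) t).ne')).div_const _ |>.continuousOn
  obtain ⟨t₀, ht₀, hmin⟩ := isCompact_Icc.exists_isMinOn ⟨0, by simp⟩ hcont
  have hmin' : ∀ t ∈ Set.Icc (0 : ℝ) 1, C t₀ ≤ C t := fun t ht => hmin ht
  refine ⟨C, fun t ht => (hC t ht).congr fun n => (one_div_mul_eq_div _ _).symm, hcont,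
    t₀, ht₀, hmin', tendsto_order.2 ⟨fun a ha => ?_, fun a ha => ?_⟩⟩
  · obtain ⟨m, hm, hma⟩ : ∃ m : ℕ, 0 < m ∧ a < C t₀ + (Real.log α - K) / m := by
      have h1 : Tendsto (fun m : ℕ => C t₀ + (Real.log α - K) / m) atTop (nhds (C t₀ + 0)) :=
        (tendsto_const_div_atTop_nhds_zero_nat _).const_add _
      rw [add_zero] at h1
      exact ((eventually_gt_atTop 0).and (h1.eventually_const_lt ha)).exists
    obtain ⟨t, ht, D, E, hlow⟩ := exists_le_log_Pmin hd hα0 hωp hσp hωfl hσfl hm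
      (hω m hm).2 (hσ m hm).2
    have hm' : (0 : ℝ) < m := by exact_mod_cast hm
    set l := (Real.log α + Real.log (chernoffTrace (ω m) (σ m) t)) / m with hl
    have hal : a < l := by
      refine hma.trans_le ?_
      rw [hl, le_div_iff₀ hm', add_mul, div_mul_cancel₀ _ hm'.ne']
      have h1 := (abs_le.1 (hCK t ht m hm)).1
      have h2 := mul_le_mul_of_nonneg_left (hmin' t ht) hm'.le
      simp only [hf] at h1
      linarith
    have h1 : Tendsto (fun n : ℕ => l - D * (√n)⁻¹ - E / n) atTop (nhds (l - D * 0 - 0)) :=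
      ((tendsto_inv_atTop_zero.comp (Real.tendsto_sqrt_atTop.comp
        tendsto_natCast_atTop_atTop)).const_mul D |>.const_sub l).sub
        (tendsto_const_div_atTop_nhds_zero_nat E)
    rw [mul_zero, sub_zero, sub_zero] at h1
    filter_upwards [h1.eventually_const_lt hal, eventually_gt_atTop 0] with n hn hn0
    refine hn.trans_le ?_
    have hn' : (0 : ℝ) < n := by exact_mod_cast hn0
    rw [one_div_mul_eq_div, le_div_iff₀ hn']
    refine le_trans (le_of_eq ?_) (hlow n hn0).2
    have h2 : (√n)⁻¹ * n = √(n : ℝ) := by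
      rw [inv_mul_eq_div, Real.div_sqrt]
    rw [sub_mul, sub_mul, mul_assoc D, h2, div_mul_cancel₀ _ hn'.ne', mul_comm l]
  · obtain ⟨_, _, _, _, hpos⟩ := exists_le_log_Pmin hd hα0 hωp hσp hωfl hσfl one_pos
      (hω 1 le_rfl).2 (hσ 1 le_rfl).2
    filter_upwards [(hC t₀ ht₀).eventually_lt_const ha, eventually_gt_atTop 0] with n hn hn0
    refine lt_of_le_of_lt ?_ hn
    rw [one_div_mul_eq_div]
    refine div_le_div_of_nonneg_right (Real.log_le_log (hpos n hn0).1 ?_) n.cast_nonneg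
    have h1 : Pmin (ω n) (σ n) ≤ 1 / 2 * chernoffTrace (ω n) (σ n) t₀ :=
      Pmin_le_trace_mpow (hωp n hn0) (hσp n hn0) ht₀
    have h2 := chernoffTrace_pos (hωp n hn0) (hσp n hn0) t₀
    linarith
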